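/- arXiv:1409.5213 — 2 statements merged into one kernel-verified Lean document; each statement's English description precedes it below -/
import Mathlib

section
/- For all integers n ≥ 3 and k ≥ 4, h(n,k) ≥ n; that is, every k-saturated graph on n ≥ 3 vertices has at least n edges. -/
/-!
A `k`-saturated graph on `n` vertices exists: take any graph maximal subject to `mp G < k`. So it
suffices to bound the number of edges of a `k`-saturated graph `G` below by `n`.

Let `z` be a vertex of maximum degree `D`. After adding an edge `uz`, the vertex `z` has strictly
the largest degree, so an ascending path can only end at `z`, and an ascending path avoiding `u`
already ascends in `G` (`ascPath_of_notMem`). Hence each long path created by `uz` passes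
through `u`, which is very restrictive when `u` has small degree:

* there is no isolated vertex (`KSaturated.gdeg_pos`);
* every leaf `u ≠ z` is adjacent to `z` (`KSaturated.leaf_adj`). Otherwise the long path forces a
  pendant path `u, x, y` whose vertices, and whose neighbours of `y`, have degree at most two, and
  adding the chord `uy` then creates no long path (`KSaturated.no_pendant`).

Since `n ≥ 3`, it follows that `D ≥ 2`. If `G` had at most `n - 1` edges, then the degree sum would
be at most `2n - 2`, while the vertices outside `N(z) ∪ {z}` contribute at least `2(n - 1 - D)` and
`z` contributes `D`. So the `D` neighbours of `z` have total degree at most `D`, and are all leaves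
(`nbrs_leaves`). Joining two of them then creates no ascending path with more than three vertices
through them (`KSaturated.not_star`), a contradiction.
-/

open SimpleGraph

variable {V : Type*}

/-- The degree of a vertex `v`: the number of neighbours of `v`. -/
noncomputable def gdeg (G : SimpleGraph V) (v : V) : ℕ := (G.neighborSet v).ncard

/-- A walk is degree monotone if the sequence of degrees of the vertices in the
order in which they appear on the walk is monotone (non-decreasing or non-increasing). -/
def IsDegMonotone (G : SimpleGraph V) {u v : V} (p : G.Walk u v) : Prop :=
  (p.support.map (gdeg G)).Chain' (· ≤ ·) ∨ (p.support.map (gdeg G)).Chain' (· ≥ ·)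

/-- `mp G` is the maximum number of vertices of a degree monotone path in `G`. -/
noncomputable def mp (G : SimpleGraph V) : ℕ :=
  sSup {n | ∃ (u v : V) (p : G.Walk u v), p.IsPath ∧ IsDegMonotone G p ∧ p.support.length = n}

/-- The graph obtained from `G` by adding the edge `uv`. -/
def addEdge (G : SimpleGraph V) (u v : V) : SimpleGraph V :=
  G ⊔ fromEdgeSet {s(u, v)}

/-- `G` is saturated if adding any edge between non-adjacent vertices increases `mp`. -/
def Saturated (G : SimpleGraph V) : Prop :=
  ∀ u v : V, u ≠ v → ¬ G.Adj u v → mp G < mp (addEdge G u v)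

/-- `G` is `k`-saturated if `mp G < k` and adding any edge between non-adjacent
vertices creates a degree monotone path on at least `k` vertices. -/
def KSaturated (k : ℕ) (G : SimpleGraph V) : Prop :=
  mp G < k ∧ ∀ u v : V, u ≠ v → ¬ G.Adj u v → k ≤ mp (addEdge G u v)

/-- `hSat n k` is the minimum number of edges of a `k`-saturated graph on `n` vertices. -/
noncomputable def hSat (n k : ℕ) : ℕ :=
  sInf {m | ∃ G : SimpleGraph (Fin n), KSaturated k G ∧ G.edgeSet.ncard = m}

/-! ### Monotone paths as lists -/

/-- The relation on vertices whose chains are the degree non-decreasing walks of `G`. -/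
def AscRel (G : SimpleGraph V) (a b : V) : Prop := G.Adj a b ∧ gdeg G a ≤ gdeg G b

/-- `l` lists the vertices of a path of `G` along which the degrees do not decrease. Up to
reversal these are all the degree monotone paths (the empty list is allowed). -/
def AscPath (G : SimpleGraph V) (l : List V) : Prop := l.Nodup ∧ l.IsChain (AscRel G)

theorem ascPath_of_walk (G : SimpleGraph V) {u v : V} (p : G.Walk u v) (hp : p.IsPath)
    (hm : IsDegMonotone G p) : ∃ l, AscPath G l ∧ l.length = p.support.length := by
  have key : ∀ {u v : V} (p : G.Walk u v), p.IsPath →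
      (p.support.map (gdeg G)).IsChain (· ≤ ·) → AscPath G p.support := by
    intro u v p hp h
    refine ⟨hp.support_nodup, ?_⟩
    have h1 := p.isChain_adj_support
    rw [List.isChain_map] at h
    rw [List.isChain_iff_getElem] at *
    exact fun i hi => ⟨h1 i hi, h i hi⟩
  rcases hm with h | h
  · exact ⟨_, key p hp h, rfl⟩
  · refine ⟨_, key p.reverse hp.reverse ?_, by simp⟩
    rw [Walk.support_reverse, List.map_reverse, List.isChain_reverse]
    exact h

theorem walk_of_ascPath (G : SimpleGraph V) {l : List V} (hl : AscPath G l) (hne : l ≠ []) :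
    ∃ (u v : V) (p : G.Walk u v), p.IsPath ∧ IsDegMonotone G p ∧
      p.support.length = l.length := by
  have hc : l.IsChain G.Adj := hl.2.imp fun _ _ h => h.1
  refine ⟨_, _, Walk.ofSupport l hne hc, ?_, Or.inl ?_, ?_⟩
  · rw [Walk.isPath_def, Walk.support_ofSupport]; exact hl.1
  · rw [Walk.support_ofSupport]
    exact (List.isChain_map _).2 (hl.2.imp fun _ _ h => h.2)
  · rw [Walk.support_ofSupport]

theorem bddAbove_mp [Finite V] (G : SimpleGraph V) :
    BddAbove {n | ∃ (u v : V) (p : G.Walk u v), p.IsPath ∧ IsDegMonotone G p ∧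
      p.support.length = n} := by
  have := Fintype.ofFinite V
  refine ⟨Fintype.card V, ?_⟩
  rintro n ⟨u, v, p, hp, -, rfl⟩
  exact hp.support_nodup.length_le_card

theorem length_lt_of_mp_lt [Finite V] {G : SimpleGraph V} {k : ℕ} (h : mp G < k) {l : List V}
    (hl : AscPath G l) : l.length < k := by
  by_cases hne : l = []
  · subst hne; simp; omega
  obtain ⟨u, v, p, hp⟩ := walk_of_ascPath G hl hne
  exact (le_csSup (bddAbove_mp G) ⟨u, v, p, hp⟩).trans_lt h

theorem exists_of_le_mp [Finite V] [Nonempty V] {G : SimpleGraph V} {k : ℕ} (h : k ≤ mp G) :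
    ∃ l, AscPath G l ∧ k ≤ l.length := by
  have hv := Classical.arbitrary V
  obtain ⟨u, v, p, hp, hm, he⟩ := Nat.sSup_mem
    (s := {n | ∃ (u v : V) (p : G.Walk u v), p.IsPath ∧ IsDegMonotone G p ∧
      p.support.length = n}) ⟨1, hv, hv, Walk.nil, by simp, Or.inl (.singleton _), by simp⟩
      (bddAbove_mp G)
  obtain ⟨l, hl, hle⟩ := ascPath_of_walk G p hp hm
  exact ⟨l, hl, by rw [hle, he]; exact h⟩

/-! ### Degrees and added edges -/

theorem addEdge_adj {G : SimpleGraph V} {u v : V} (huv : u ≠ v) (a b : V) :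
    (addEdge G u v).Adj a b ↔ G.Adj a b ∨ (a = u ∧ b = v) ∨ (a = v ∧ b = u) := by
  simp only [addEdge, sup_adj, fromEdgeSet_adj, Set.mem_singleton_iff, Sym2.eq_iff]
  grind

theorem gdeg_addEdge_of_ne {G : SimpleGraph V} {u v w : V} (huv : u ≠ v) (h1 : w ≠ u)
    (h2 : w ≠ v) : gdeg (addEdge G u v) w = gdeg G w := by
  unfold gdeg
  congr 1
  ext b
  simp [addEdge_adj huv, h1, h2]

theorem gdeg_addEdge_left [Finite V] {G : SimpleGraph V} {u v : V} (huv : u ≠ v)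
    (h : ¬ G.Adj u v) : gdeg (addEdge G u v) u = gdeg G u + 1 := by
  have : (addEdge G u v).neighborSet u = insert v (G.neighborSet u) := by
    ext b
    simp only [mem_neighborSet, addEdge_adj huv, Set.mem_insert_iff]
    grind
  unfold gdeg
  rw [this, Set.ncard_insert_of_notMem (by simpa using h) (Set.toFinite _)]

theorem gdeg_addEdge_right [Finite V] {G : SimpleGraph V} {u v : V} (huv : u ≠ v)
    (h : ¬ G.Adj u v) : gdeg (addEdge G u v) v = gdeg G v + 1 := by
  have hc : addEdge G u v = addEdge G v u := by
    ext a b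
    rw [addEdge_adj huv, addEdge_adj huv.symm]; tauto
  rw [hc]
  exact gdeg_addEdge_left huv.symm fun h' => h h'.symm

theorem gdeg_pos_of_adj [Finite V] {G : SimpleGraph V} {a b : V} (h : G.Adj a b) :
    1 ≤ gdeg G a :=
  (Set.ncard_pos (Set.toFinite _)).2 ⟨b, h⟩

theorem two_le_gdeg [Finite V] {G : SimpleGraph V} {a b c : V} (hb : G.Adj a b)
    (hc : G.Adj a c) (h : b ≠ c) : 2 ≤ gdeg G a := by
  have := (Set.one_lt_ncard (s := G.neighborSet a) (Set.toFinite _)).2 ⟨b, hb, c, hc, h⟩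
  exact this

theorem eq_of_gdeg_le_one [Finite V] {G : SimpleGraph V} {a b c : V} (h : gdeg G a ≤ 1)
    (hb : G.Adj a b) (hc : G.Adj a c) : b = c := by
  by_contra hne
  have := two_le_gdeg hb hc hne
  omega

theorem eq_or_eq_of_gdeg_le_two [Finite V] {G : SimpleGraph V} {a b c w : V}
    (h : gdeg G a ≤ 2) (hb : G.Adj a b) (hc : G.Adj a c) (hne : b ≠ c) (hw : G.Adj a w) :
    w = b ∨ w = c := by
  have hsub : ({b, c} : Set V) ⊆ G.neighborSet a := by
    rintro x (rfl | rfl) <;> assumption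
  have := Set.eq_of_subset_of_ncard_le hsub (by rw [Set.ncard_pair hne]; exact h)
    (Set.toFinite _)
  have hmem : w ∈ ({b, c} : Set V) := by rw [this]; exact hw
  simpa using hmem

/-! ### Ascending paths -/

/-- A walk through a vertex of `P ∩ Q`, where `P` is closed under predecessors and `Q` under
successors, never leaves `P ∪ Q`. -/
theorem chain_closed {R : V → V → Prop} {P Q : V → Prop} (hP : ∀ a b, R a b → P b → P a)
    (hQ : ∀ a b, R a b → Q a → Q b) {l : List V} (hl : l.IsChain R) {c : V} (hc : c ∈ l)
    (hPc : P c) (hQc : Q c) : ∀ d ∈ l, P d ∨ Q d := by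
  let S : V → V → Prop := fun a b => (P b → P a) ∧ (Q a → Q b)
  have : Trans S S S := ⟨fun h1 h2 => ⟨fun h => h1.1 (h2.1 h), fun h => h2.2 (h1.2 h)⟩⟩
  have hS : l.IsChain S := hl.imp fun a b h => ⟨hP a b h, hQ a b h⟩
  rw [List.isChain_iff_pairwise] at hS
  intro d hd
  rcases eq_or_ne d c with rfl | hne
  · exact Or.inl hPc
  · obtain ⟨i, hi, rfl⟩ := List.getElem_of_mem hc
    obtain ⟨j, hj, rfl⟩ := List.getElem_of_mem hd
    rw [List.pairwise_iff_getElem] at hS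
    rcases lt_trichotomy i j with h | h | h
    · exact Or.inr ((hS i j hi hj h).2 hQc)
    · subst h; exact Or.inl hPc
    · exact Or.inl ((hS j i hj hi h).1 hPc)

theorem length_le_three {l : List V} (hl : l.Nodup) {a b c : V}
    (h : ∀ d ∈ l, d = a ∨ d = b ∨ d = c) : l.length ≤ 3 := by
  classical
  rw [← List.toFinset_card_of_nodup hl]
  calc l.toFinset.card ≤ ({a, b, c} : Finset V).card := by
        apply Finset.card_le_card
        intro d hd
        simpa using h d (by simpa using hd)
    _ ≤ 3 := Finset.card_le_three

/-- On a path with at least four vertices, the second vertex has degree at least two, hence so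
have its two successors. -/
theorem three_big [Finite V] {G : SimpleGraph V} {l : List V} (hl : AscPath G l)
    (h4 : 4 ≤ l.length) : ∃ b c d, b ≠ c ∧ b ≠ d ∧ c ≠ d ∧
      2 ≤ gdeg G b ∧ 2 ≤ gdeg G c ∧ 2 ≤ gdeg G d := by
  match l, h4, hl with
  | a :: b :: c :: d :: t, _, ⟨hn, hc⟩ =>
    simp only [List.isChain_cons_cons, AscRel] at hc
    have := two_le_gdeg hc.1.1.symm hc.2.1.1 (by grind)
    exact ⟨b, c, d, by grind, by grind, by grind, this, by omega, by omega⟩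

/-- If the edge `uz` is added at a vertex `z` of maximum degree, then a path ascending in the new
graph and avoiding `u` already ascends in `G`, because `z` can only be its last vertex. -/
theorem ascPath_of_notMem [Finite V] {G : SimpleGraph V} {u z : V} (huz : u ≠ z)
    (hadj : ¬ G.Adj u z) (hz : ∀ w, gdeg G w ≤ gdeg G z) {l : List V}
    (hl : AscPath (addEdge G u z) l) (hu : u ∉ l) : AscPath G l := by
  refine ⟨hl.1, hl.2.imp_of_mem_imp ?_⟩
  rintro a b ha hb ⟨hab, hd⟩
  have hau : a ≠ u := by grind
  have hbu : b ≠ u := by grind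
  rw [addEdge_adj huz] at hab
  have hab' : G.Adj a b := by tauto
  refine ⟨hab', ?_⟩
  rcases eq_or_ne b z with rfl | hbz
  · exact hz a
  rw [gdeg_addEdge_of_ne huz hbu hbz] at hd
  rcases eq_or_ne a z with rfl | haz
  · rw [gdeg_addEdge_right huz hadj] at hd; omega
  · rwa [gdeg_addEdge_of_ne huz hau haz] at hd

theorem KSaturated.exists_long [Finite V] {G : SimpleGraph V} {k : ℕ} (h : KSaturated k G)
    (hk : 4 ≤ k) {u v : V} (huv : u ≠ v) (hadj : ¬ G.Adj u v) :
    ∃ l, AscPath (addEdge G u v) l ∧ k ≤ l.length ∧ 4 ≤ l.length := by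
  have : Nonempty V := ⟨u⟩
  obtain ⟨l, hl, hkl⟩ := exists_of_le_mp (h.2 u v huv hadj)
  exact ⟨l, hl, hkl, hk.trans hkl⟩

/-! ### Isolated vertices and leaves -/

/-- If `G` has an edge, it has no isolated vertex: joining one to a vertex `z` of maximum degree
creates no long path. -/
theorem KSaturated.gdeg_pos [Finite V] {G : SimpleGraph V} {k : ℕ} (h : KSaturated k G)
    (hk : 4 ≤ k) {z : V} (hz : ∀ w, gdeg G w ≤ gdeg G z) (hzpos : 1 ≤ gdeg G z) (w : V) :
    1 ≤ gdeg G w := by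
  by_contra h0
  have hw0 : gdeg G w = 0 := by omega
  have hno : ∀ b, ¬ G.Adj w b := fun b hb => h0 (gdeg_pos_of_adj hb)
  have hwz : w ≠ z := by rintro rfl; omega
  obtain ⟨l, hl, hkl, h4⟩ := h.exists_long hk hwz (hno z)
  have hdw := gdeg_addEdge_left hwz (hno z)
  have hdz := gdeg_addEdge_right hwz (hno z)
  by_cases hwl : w ∈ l
  · have := chain_closed (R := AscRel (addEdge G w z)) (P := fun a => a = w)
      (Q := fun a => a = w ∨ a = z) (c := w) ?_ ?_ hl.2 hwl rfl (Or.inl rfl)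
    · have := length_le_three hl.1 (a := w) (b := z) (c := z) (by grind)
      omega
    · rintro a b ⟨hab, hd⟩ rfl
      rw [addEdge_adj hwz] at hab
      have := hno a
      grind [SimpleGraph.adj_comm]
    · rintro a b ⟨hab, hd⟩ hq
      rw [addEdge_adj hwz] at hab
      have := hno b
      rcases hq with rfl | rfl
      · grind
      · by_contra hb
        push Not at hb
        have h1 := hz b
        rw [gdeg_addEdge_of_ne hwz hb.1 hb.2] at hd
        omega
  · have := length_lt_of_mp_lt h.1 (ascPath_of_notMem hwz (hno z) hz hl hwl)
    omega

/-- There is no pendant path `u, x, y` with `u` a leaf, `x` of degree two, `y` of degree at most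
two and every neighbour of `y` of degree at most two: the chord `uy` creates no long path. -/
theorem KSaturated.no_pendant [Finite V] {G : SimpleGraph V} {k : ℕ} (h : KSaturated k G)
    (hk : 4 ≤ k) {u x y : V} (hu : ∀ w, G.Adj u w → w = x) (hx : ∀ w, G.Adj x w → w = u ∨ w = y)
    (hux : G.Adj u x) (hxy : G.Adj x y) (huy : u ≠ y) (hy2 : gdeg G y ≤ 2)
    (hy : ∀ w, G.Adj y w → gdeg G w ≤ 2) : False := by
  have hu1 : gdeg G u ≤ 1 := by
    unfold gdeg
    rw [Set.ncard_le_one (Set.toFinite _)]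
    intro a ha b hb
    rw [hu a ha, hu b hb]
  have hx2 : gdeg G x ≤ 2 := by
    have hs : G.neighborSet x ⊆ {u, y} := fun w hw => by simpa using hx w hw
    exact (Set.ncard_le_ncard hs (Set.toFinite _)).trans (Set.ncard_pair huy).le
  have hna : ¬ G.Adj u y := fun hh => hxy.ne (hu y hh).symm
  obtain ⟨l, hl, hkl, h4⟩ := h.exists_long hk huy hna
  have hdu := gdeg_addEdge_left huy hna
  have hdy := gdeg_addEdge_right huy hna
  have hd := fun w (h1 : w ≠ u) (h2 : w ≠ y) => gdeg_addEdge_of_ne (G := G) huy h1 h2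
  have hadj := addEdge_adj (G := G) huy
  have hxu : x ≠ u := hux.ne'
  have hxy' : x ≠ y := hxy.ne
  have bad : (∀ d ∈ l, d = u ∨ d = x ∨ d = y) → False := fun hh => by
    have := length_le_three hl.1 hh
    omega
  have hy1 : 1 ≤ gdeg G y := gdeg_pos_of_adj hxy.symm
  by_cases hdeg : gdeg G y = 1
  · -- `u, x, y` now form a triangle component
    have hyx : ∀ w, G.Adj y w → w = x := fun w hw =>
      eq_of_gdeg_le_one hdeg.le hw hxy.symm
    by_cases hm : ∃ c ∈ l, c = u ∨ c = x ∨ c = y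
    · obtain ⟨c, hc, hcc⟩ := hm
      have := chain_closed (R := AscRel (addEdge G u y)) (P := fun a => a = u ∨ a = x ∨ a = y)
        (Q := fun a => a = u ∨ a = x ∨ a = y) ?_ ?_ hl.2 hc hcc hcc
      · exact bad fun d hd => (this d hd).elim id id
      · rintro a b ⟨hab, -⟩ hb
        have := hab.symm
        rw [hadj] at this
        grind
      · rintro a b ⟨hab, -⟩ hb
        rw [hadj] at hab
        grind
    · push Not at hm
      have hA : AscPath G l := by
        refine ⟨hl.1, hl.2.imp_of_mem_imp ?_⟩
        rintro a b ha hb ⟨hab, hdd⟩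
        rw [hd a (hm a ha).1 (hm a ha).2.2, hd b (hm b hb).1 (hm b hb).2.2] at hdd
        have := hm a ha
        rw [hadj] at hab
        exact ⟨by tauto, hdd⟩
      have := length_lt_of_mp_lt h.1 hA
      omega
  · have hdeg2 : gdeg G y = 2 := by omega
    -- `y` has new degree three, more than all its neighbours, so it can only end the path
    have hlast : ∀ b, ¬ AscRel (addEdge G u y) y b := by
      rintro b ⟨hab, hdd⟩
      have hby : b ≠ y := hab.ne'
      rcases eq_or_ne b u with rfl | hbu
      · omega
      · rw [hadj] at hab
        have : G.Adj y b := by tauto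
        have := hy b this
        rw [hd b hbu hby] at hdd
        omega
    by_cases hm : ∃ c ∈ l, c = u ∨ c = x
    · obtain ⟨c, hc, hcc⟩ := hm
      have := chain_closed (R := AscRel (addEdge G u y)) (P := fun a => a = u ∨ a = x)
        (Q := fun a => a = u ∨ a = x ∨ a = y) ?_ ?_ hl.2 hc hcc (by tauto)
      · exact bad fun d hd => by have := this d hd; tauto
      · rintro a b hab hb
        have hay : a ≠ y := by rintro rfl; exact hlast b hab
        have := hab.1.symm
        rw [hadj] at this
        grind
      · rintro a b hab hb
        have hay : a ≠ y := by rintro rfl; exact hlast b hab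
        have := hab.1
        rw [hadj] at this
        grind
    · push Not at hm
      have hA : AscPath G l := by
        refine ⟨hl.1, hl.2.imp_of_mem_imp ?_⟩
        rintro a b ha hb hab
        have hay : a ≠ y := by rintro rfl; exact hlast b hab
        obtain ⟨hab, hdd⟩ := hab
        have h1 := hm a ha
        have h2 := hm b hb
        rw [hadj] at hab
        have hG : G.Adj a b := by tauto
        refine ⟨hG, ?_⟩
        rw [hd a h1.1 hay] at hdd
        rcases eq_or_ne b y with rfl | hby
        · have := hy a hG.symm
          omega
        · rwa [hd b h2.1 hby] at hdd
      have := length_lt_of_mp_lt h.1 hA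
      omega

/-- Every leaf is adjacent to every other vertex of maximum degree. If the edge `uz` is missing,
the long path it creates must climb through the neighbour `x` of `u` to `u`, so that `x` and the
vertices before it have degree at most two, and `u` lies at the end of a pendant path. -/
theorem KSaturated.leaf_adj [Finite V] {G : SimpleGraph V} {k : ℕ} (h : KSaturated k G)
    (hk : 4 ≤ k) {z : V} (hz : ∀ w, gdeg G w ≤ gdeg G z) (hpos : ∀ w, 1 ≤ gdeg G w)
    {u : V} (hu1 : gdeg G u = 1) (huz : u ≠ z) : G.Adj u z := by
  by_contra hna
  obtain ⟨x, hux⟩ : ∃ x, G.Adj u x := by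
    obtain ⟨x, hx⟩ := Set.ncard_eq_one.1 hu1
    exact ⟨x, by rw [← mem_neighborSet, hx]; rfl⟩
  have hu : ∀ w, G.Adj u w → w = x := fun w hw => eq_of_gdeg_le_one hu1.le hw hux
  obtain ⟨l, hl, hkl, h4⟩ := h.exists_long hk huz hna
  have hdu := gdeg_addEdge_left huz hna
  have hdz := gdeg_addEdge_right huz hna
  have hd := fun w (h1 : w ≠ u) (h2 : w ≠ z) => gdeg_addEdge_of_ne (G := G) huz h1 h2
  have hadj := addEdge_adj (G := G) huz
  have hxz : x ≠ z := by rintro rfl; exact hna hux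
  have hxu : x ≠ u := hux.ne'
  have hD : 2 ≤ gdeg G z := by
    by_contra hD
    obtain ⟨b, c, d, hbc, hbd, hcd, hb, hc, hd'⟩ := three_big hl h4
    have key : ∀ w, 2 ≤ gdeg (addEdge G u z) w → w = u ∨ w = z := by
      intro w hw
      by_contra hne
      push Not at hne
      have := hz w
      rw [hd w hne.1 hne.2] at hw
      omega
    have := key b hb
    have := key c hc
    have := key d hd'
    grind
  -- `z` can only be the last vertex of the path
  have hlast : ∀ b, ¬ AscRel (addEdge G u z) z b := by
    rintro b ⟨hab, hdd⟩
    have hbz : b ≠ z := hab.ne'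
    have := hz b
    rcases eq_or_ne b u with rfl | hbu
    · omega
    · rw [hd b hbu hbz] at hdd
      omega
  have hpred : ∀ a, AscRel (addEdge G u z) a u → a = x ∧ gdeg G x ≤ 2 := by
    intro a hab
    have haz : a ≠ z := by rintro rfl; exact hlast u hab
    have hau : a ≠ u := hab.1.ne
    have h1 := hab.1.symm
    rw [hadj] at h1
    have hax : a = x := by have := hu a; tauto
    subst hax
    have h2 := hab.2
    rw [hd a hau haz] at h2
    exact ⟨rfl, by omega⟩
  have hsucc : ∀ b, AscRel (addEdge G u z) u b → b = x ∨ b = z := by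
    intro b hab
    have h1 := hab.1
    rw [hadj] at h1
    have := hu b
    tauto
  have toG : ∀ a b, a ≠ u → b ≠ u → b ≠ z → AscRel (addEdge G u z) a b → AscRel G a b := by
    intro a b ha hb hbz hab
    have haz : a ≠ z := by rintro rfl; exact hlast b hab
    have h1 := hab.1
    have h2 := hab.2
    rw [hd a ha haz, hd b hb hbz] at h2
    rw [hadj] at h1
    exact ⟨by tauto, h2⟩
  by_cases hul : u ∈ l
  swap
  · have := length_lt_of_mp_lt h.1 (ascPath_of_notMem huz hna hz hl hul)
    omega
  obtain ⟨A, B, rfl⟩ := List.append_of_mem hul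
  obtain ⟨hnd, hch⟩ := hl
  have hB : B = [] ∨ (∃ B', B = x :: B') ∨ B = [z] := by
    have hch2 := (List.isChain_append.1 hch).2.1
    match B, hch2 with
    | [], _ => exact Or.inl rfl
    | b :: B', hc =>
      rw [List.isChain_cons_cons] at hc
      rcases hsucc b hc.1 with rfl | rfl
      · exact Or.inr (Or.inl ⟨B', rfl⟩)
      · match B', hc with
        | [], _ => exact Or.inr (Or.inr rfl)
        | c :: B'', hc =>
          rw [List.isChain_cons_cons] at hc
          exact (hlast c hc.2.1).elim
  rcases List.eq_nil_or_concat' A with rfl | ⟨A, x', rfl⟩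
  · -- the path starts at `u`
    rcases hB with rfl | ⟨B', rfl⟩ | rfl
    · simp at h4
    · rw [List.nil_append] at hnd hch
      have hA : AscPath G (u :: x :: B') := by
        refine ⟨hnd, ?_⟩
        rw [List.isChain_cons_cons] at hch ⊢
        refine ⟨⟨hux, by rw [hu1]; exact hpos x⟩, ?_⟩
        refine (ascPath_of_notMem huz hna hz ⟨hnd.of_cons, hch.2⟩ ?_).2
        exact (List.nodup_cons.1 hnd).1
      have := length_lt_of_mp_lt h.1 hA
      simp at this hkl
      omega
    · simp at h4
  · have hx' : AscRel (addEdge G u z) x' u := by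
      rw [List.isChain_append] at hch
      exact hch.2.2 x' (by simp) u (by simp)
    obtain ⟨rfl, hx2⟩ := hpred x' hx'
    have hBl : B.length ≤ 1 := by
      rcases hB with rfl | ⟨B', rfl⟩ | rfl
      · simp
      · exfalso; simp [List.nodup_append] at hnd
      · simp
    rcases List.eq_nil_or_concat' A with rfl | ⟨A, y, rfl⟩
    · simp at h4; omega
    have hyx' : AscRel (addEdge G u z) y x' := by
      rw [List.append_assoc, List.append_assoc, List.isChain_append] at hch
      have := hch.2.1
      simp only [List.cons_append, List.nil_append, List.isChain_cons_cons] at this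
      exact this.1
    have hyu : y ≠ u := by rintro rfl; simp [List.nodup_append] at hnd
    have hyx := toG y x' hyu hxu hxz hyx'
    have hxnbr : ∀ w, G.Adj x' w → w = u ∨ w = y := fun w hw =>
      eq_or_eq_of_gdeg_le_two hx2 hux.symm hyx.1.symm hyu.symm hw
    refine h.no_pendant hk hu hxnbr hux hyx.1.symm hyu.symm (hyx.2.trans hx2) ?_
    intro w hw
    by_cases hwx : w = x'
    · rw [hwx]; exact hx2
    rcases List.eq_nil_or_concat' A with rfl | ⟨A, v, rfl⟩
    · -- now `k = 4`, and `u, x, y, w` would be ascending in `G`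
      by_contra hw2
      have hwu : w ≠ u := by
        rintro rfl
        exact hyx.1.ne (hu y hw.symm)
      have hk4 : k ≤ 4 := by simp at hkl; omega
      have hxge : 2 ≤ gdeg G x' := two_le_gdeg hux.symm hyx.1.symm hyu.symm
      by_cases hy1 : gdeg G y ≤ 1
      · exact hwx (eq_of_gdeg_le_one hy1 hw hyx.1)
      have hA : AscPath G [u, x', y, w] := by
        refine ⟨?_, ?_⟩
        · have := hw.ne
          have := hyx.1.ne
          grind
        · simp only [List.isChain_cons_cons, AscRel, List.isChain_singleton, and_true]
          have := hyx.2
          exact ⟨⟨hux, by omega⟩, ⟨hyx.1.symm, by omega⟩, hw, by omega⟩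
      have := length_lt_of_mp_lt h.1 hA
      simp at this
      omega
    · have hvy' : AscRel (addEdge G u z) v y := by
        simp only [List.append_assoc] at hch
        rw [List.isChain_append] at hch
        have := hch.2.1
        simp only [List.cons_append, List.nil_append, List.isChain_cons_cons] at this
        exact this.1
      have hvu : v ≠ u := by rintro rfl; simp [List.nodup_append] at hnd
      have hvx : v ≠ x' := by rintro rfl; simp [List.nodup_append] at hnd
      have hyz : y ≠ z := by rintro rfl; exact hlast _ hyx'
      have hvy := toG v y hvu hyu hyz hvy'
      rcases eq_or_eq_of_gdeg_le_two (hyx.2.trans hx2) hyx.1 hvy.1.symm hvx.symm hw with rfl | rfl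
      · exact (hwx rfl).elim
      · exact hvy.2.trans (hyx.2.trans hx2)

/-- The neighbours of a vertex `z` of degree at least two are not all leaves: joining two of them
creates no long path. -/
theorem KSaturated.not_star [Finite V] {G : SimpleGraph V} {k : ℕ} (h : KSaturated k G)
    (hk : 4 ≤ k) {z : V} (hD : 2 ≤ gdeg G z) (hz : ∀ w, G.Adj z w → gdeg G w = 1) : False := by
  obtain ⟨u, huz, v, hvz, huv⟩ := (Set.one_lt_ncard (s := G.neighborSet z) (Set.toFinite _)).1 hD
  rw [mem_neighborSet] at huz hvz
  have hu : ∀ w, G.Adj u w → w = z := fun w hw =>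
    eq_of_gdeg_le_one (hz u huz).le hw huz.symm
  have hv : ∀ w, G.Adj v w → w = z := fun w hw =>
    eq_of_gdeg_le_one (hz v hvz).le hw hvz.symm
  have hna : ¬ G.Adj u v := fun hh => hvz.ne (hu v hh).symm
  obtain ⟨l, hl, hkl, h4⟩ := h.exists_long hk huv hna
  have hdu := gdeg_addEdge_left huv hna
  have hdv := gdeg_addEdge_right huv hna
  rw [hz u huz] at hdu
  rw [hz v hvz] at hdv
  have hd := fun w (h1 : w ≠ u) (h2 : w ≠ v) => gdeg_addEdge_of_ne (G := G) huv h1 h2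
  have hadj := addEdge_adj (G := G) huv
  have hzu := huz.ne
  have hzv := hvz.ne
  have hdz := hd z hzu hzv
  have bad : (∀ d ∈ l, d = u ∨ d = v ∨ d = z) → False := fun hh => by
    have := length_le_three hl.1 hh
    omega
  by_cases hm : ∃ c ∈ l, c = u ∨ c = v
  · obtain ⟨c, hc, hcc⟩ := hm
    by_cases hD2 : gdeg G z = 2
    · -- `u, v, z` form a triangle component
      have hzn : ∀ w, G.Adj z w → w = u ∨ w = v := fun w hw =>
        eq_or_eq_of_gdeg_le_two hD2.le huz hvz huv hw
      have := chain_closed (R := AscRel (addEdge G u v)) (P := fun a => a = u ∨ a = v ∨ a = z)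
        (Q := fun a => a = u ∨ a = v ∨ a = z) ?_ ?_ hl.2 hc (by tauto) (by tauto)
      · exact bad fun d hd => (this d hd).elim id id
      · rintro a b ⟨hab, -⟩ hb
        have := hab.symm
        rw [hadj] at this
        grind
      · rintro a b ⟨hab, -⟩ hb
        rw [hadj] at hab
        grind
    · -- all neighbours of `z` have smaller degree, so `z` can only end the path
      have hlast : ∀ b, ¬ AscRel (addEdge G u v) z b := by
        rintro b ⟨hab, hdd⟩
        by_cases hb : b = u ∨ b = v
        · rcases hb with rfl | rfl <;> omega
        · push Not at hb
          rw [hadj] at hab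
          have := hz b (by tauto)
          rw [hd b hb.1 hb.2] at hdd
          omega
      have := chain_closed (R := AscRel (addEdge G u v)) (P := fun a => a = u ∨ a = v)
        (Q := fun a => a = u ∨ a = v ∨ a = z) ?_ ?_ hl.2 hc hcc (by tauto)
      · exact bad fun d hd => by have := this d hd; tauto
      · rintro a b hab hb
        have haz : a ≠ z := by rintro rfl; exact hlast b hab
        have := hab.1.symm
        rw [hadj] at this
        grind
      · rintro a b hab hb
        have haz : a ≠ z := by rintro rfl; exact hlast b hab
        have := hab.1
        rw [hadj] at this
        grind
  · push Not at hm
    have hA : AscPath G l := by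
      refine ⟨hl.1, hl.2.imp_of_mem_imp ?_⟩
      rintro a b ha hb ⟨hab, hdd⟩
      have h1 := hm a ha
      have h2 := hm b hb
      rw [hadj] at hab
      rw [hd a h1.1 h1.2, hd b h2.1 h2.2] at hdd
      exact ⟨by tauto, hdd⟩
    have := length_lt_of_mp_lt h.1 hA
    omega

/-! ### Counting edges -/

theorem sum_gdeg {n : ℕ} (G : SimpleGraph (Fin n)) :
    ∑ v, gdeg G v = 2 * G.edgeSet.ncard := by
  classical
  have h1 : ∀ v, gdeg G v = G.degree v := fun v => by
    unfold gdeg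
    rw [Set.ncard_eq_toFinset_card', ← card_neighborFinset_eq_degree]
    rfl
  simp only [h1]
  rw [sum_degrees_eq_twice_card_edges, Set.ncard_eq_toFinset_card']
  rfl

/-- The counting step: if there is no isolated vertex, every leaf other than `z` is adjacent to `z`
and there are fewer than `n` edges, then all neighbours of `z` are leaves. -/
theorem nbrs_leaves {n : ℕ} (G : SimpleGraph (Fin n)) {z : Fin n} (hpos : ∀ w, 1 ≤ gdeg G w)
    (hleaf : ∀ u, u ≠ z → gdeg G u = 1 → G.Adj u z) (he : G.edgeSet.ncard < n) :
    ∀ w, G.Adj z w → gdeg G w = 1 := by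
  classical
  intro w hw
  by_contra hne
  have hw2 : 2 ≤ gdeg G w := by have := hpos w; omega
  have hsum := sum_gdeg G
  -- `deg v ≥ 2 - [v ∈ N(z)] + [v = w] + (deg z - 2) [v = z]`, without subtraction
  have hpt : ∀ v, 2 + (if v = w then 1 else 0) + (if v = z then gdeg G z else 0) ≤
      gdeg G v + (if G.Adj z v then 1 else 0) + (if v = z then 2 else 0) := by
    intro v
    have := hpos v
    have := hleaf v
    have := hw.ne
    by_cases hvz : v = z
    · subst hvz
      simp [this]
      omega
    · by_cases hvw : v = w
      · subst hvw; simp [hvz, hw]; omega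
      · have h3 := hleaf v hvz
        rw [G.adj_comm] at h3
        by_cases hA : G.Adj z v
        · simp [hvz, hvw, hA]; omega
        · have : gdeg G v ≠ 1 := fun hh => hA (h3 hh)
          simp [hvz, hvw, hA]; omega
  have hS := Finset.sum_le_sum fun v (_ : v ∈ Finset.univ) => hpt v
  have hN : ∑ v, (if G.Adj z v then 1 else 0) = gdeg G z := by
    unfold gdeg
    rw [Set.ncard_eq_toFinset_card', Finset.sum_boole]
    simp only [Nat.cast_id]
    congr 1
    ext v
    simp
  simp only [Finset.sum_add_distrib, Finset.sum_ite_eq', Finset.mem_univ, if_true,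
    Finset.sum_const, Finset.card_univ, Fintype.card_fin, smul_eq_mul] at hS
  rw [hN, hsum] at hS
  omega

theorem KSaturated.le_ncard_edgeSet {n k : ℕ} (hn : 3 ≤ n) (hk : 4 ≤ k)
    {G : SimpleGraph (Fin n)} (h : KSaturated k G) : n ≤ G.edgeSet.ncard := by
  by_contra he
  push Not at he
  have : Nonempty (Fin n) := ⟨⟨0, by omega⟩⟩
  obtain ⟨z, hz⟩ := Finite.exists_max (gdeg G)
  have hzpos : 1 ≤ gdeg G z := by
    by_contra h0
    have hna : ∀ a b, ¬ G.Adj a b := fun a b hab => h0 ((gdeg_pos_of_adj hab).trans (hz a))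
    have huv : (⟨0, by omega⟩ : Fin n) ≠ ⟨1, by omega⟩ := by simp
    obtain ⟨l, hl, hkl, h4⟩ := h.exists_long hk huv (hna _ _)
    obtain ⟨b, -, -, -, -, -, hb, -, -⟩ := three_big hl h4
    have h1 := gdeg_addEdge_left huv (hna _ _)
    have h2 := gdeg_addEdge_right huv (hna _ _)
    have h3 := gdeg_addEdge_of_ne (G := G) (w := b) huv
    have := hz ⟨0, by omega⟩
    have := hz ⟨1, by omega⟩
    have := hz b
    grind
  have hpos := h.gdeg_pos hk hz hzpos
  have hleaf : ∀ u, u ≠ z → gdeg G u = 1 → G.Adj u z := fun u huz hu =>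
    h.leaf_adj hk hz hpos hu huz
  have hD : 2 ≤ gdeg G z := by
    by_contra hD
    have h1 : ∀ u, u ≠ z → G.Adj z u := fun u huz =>
      (hleaf u huz (by have := hz u; have := hpos u; omega)).symm
    obtain ⟨a, b, haz, hbz, hab⟩ : ∃ a b : Fin n, a ≠ z ∧ b ≠ z ∧ a ≠ b := by
      have hc : 1 < (Finset.univ.erase z).card := by
        rw [Finset.card_erase_of_mem (Finset.mem_univ z), Finset.card_univ, Fintype.card_fin]
        omega
      obtain ⟨a, ha, b, hb, hab⟩ := Finset.one_lt_card.1 hc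
      exact ⟨a, b, (Finset.mem_erase.1 ha).1, (Finset.mem_erase.1 hb).1, hab⟩
    exact hab (eq_of_gdeg_le_one (by omega) (h1 a haz) (h1 b hbz))
  exact h.not_star hk hD (nbrs_leaves G hpos hleaf he)

/-- A graph that is maximal subject to `mp G < k` is `k`-saturated; hence the minimum defining
`hSat n k` is taken over a nonempty set. -/
theorem exists_kSaturated {n k : ℕ} (hn : 3 ≤ n) (hk : 4 ≤ k) :
    ∃ G : SimpleGraph (Fin n), KSaturated k G := by
  have : Nonempty (Fin n) := ⟨⟨0, by omega⟩⟩
  have hbot : mp (⊥ : SimpleGraph (Fin n)) < k := by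
    by_contra hc
    push Not at hc
    obtain ⟨l, hl, hkl⟩ := exists_of_le_mp hc
    obtain ⟨b, -, -, -, -, -, hb, -, -⟩ := three_big hl (hk.trans hkl)
    have : gdeg (⊥ : SimpleGraph (Fin n)) b = 0 := by simp [gdeg, neighborSet]
    omega
  obtain ⟨G, hG⟩ := (Set.toFinite {G : SimpleGraph (Fin n) | mp G < k}).exists_maximal ⟨⊥, hbot⟩
  refine ⟨G, hG.1, fun u v huv hna => ?_⟩
  by_contra hc
  push Not at hc
  exact hna (hG.2 (y := addEdge G u v) hc le_sup_left
    ((addEdge_adj huv u v).2 (Or.inr (Or.inl ⟨rfl, rfl⟩))))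

theorem stmt_4 (n k : ℕ) (hn : 3 ≤ n) (hk : 4 ≤ k) : n ≤ hSat n k := by
  obtain ⟨G, hG⟩ := exists_kSaturated hn hk
  obtain ⟨H, hH, he⟩ := Nat.sInf_mem
    (s := {m | ∃ G : SimpleGraph (Fin n), KSaturated k G ∧ G.edgeSet.ncard = m}) ⟨_, G, hG, rfl⟩
  rw [hSat, ← he]
  exact hH.le_ncard_edgeSet hn hk
end

section
/- Let G be a finite simple graph (with at least one vertex) that is saturated and has mp(G) = k. Let H = G + v be the graph obtained from G by adding a new vertex v adjacent to all vertices of G. Then mp(H) = k+1 and H is saturated. -/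
/-! For every finite graph `G`, coning raises `mp` by exactly one (`mp_cone`). Coning adds one to
the degree of each old vertex and the apex has the largest possible degree, so a non-decreasing
path of `G` can be prolonged by the apex. Conversely, delete the apex from a non-decreasing path of
the cone. If it was an inner vertex, the vertex `y` after it has degree at least `|V|` in the cone,
so `y` is adjacent in `G` to every other vertex and has maximum degree. In particular `y` may
directly follow the vertex that preceded the apex, and what remains is a non-decreasing path of `G`.

A non-adjacent pair of distinct vertices of the cone lies in `G`, and adding an edge between old
vertices commutes with coning (`addEdge_cone`), so saturation of the cone is the inequality
`mp G < mp (addEdge G x y)` with one added to both sides.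

Degree monotone paths are handled as duplicate-free lists of vertices in which consecutive entries
satisfy `UpAdj`. -/

open SimpleGraph

variable {V : Type*}

/-- The graph obtained from `G` by adding a new vertex (`none`) adjacent to all
vertices of `G`. -/
def cone (G : SimpleGraph V) : SimpleGraph (Option V) :=
  fromRel (fun a b => (∃ x y, a = some x ∧ b = some y ∧ G.Adj x y) ∨ a = none)

/-- `b` is a neighbour of `a` whose degree is at least that of `a`. Duplicate-free chains for this
relation are the non-decreasing paths, which suffice to compute `mp` by reversing a non-increasing
path. -/
def UpAdj (G : SimpleGraph V) (a b : V) : Prop := G.Adj a b ∧ gdeg G a ≤ gdeg G b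

theorem isChain_upAdj_iff (G : SimpleGraph V) (l : List V) :
    l.IsChain (UpAdj G) ↔ l.IsChain G.Adj ∧ (l.map (gdeg G)).IsChain (· ≤ ·) := by
  rw [List.isChain_map]
  induction l with
  | nil => simp
  | cons a l ih =>
    simp only [List.isChain_cons, ih, UpAdj]
    grind

theorem mp_le (G : SimpleGraph V) (m : ℕ)
    (h : ∀ l : List V, l.Nodup → l.IsChain (UpAdj G) → l.length ≤ m) : mp G ≤ m := by
  rcases isEmpty_or_nonempty V with hV | ⟨⟨w⟩⟩
  · simp [mp]
  · refine csSup_le ⟨_, w, w, Walk.nil, Walk.IsPath.nil, ?_, rfl⟩ ?_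
    · left
      simp [List.Chain']
    rintro n ⟨u, v, p, hp, hd | hd, rfl⟩
    · exact h _ hp.support_nodup ((isChain_upAdj_iff G _).2 ⟨p.isChain_adj_support, hd⟩)
    · rw [← List.length_reverse]
      refine h _ (List.nodup_reverse.2 hp.support_nodup) ((isChain_upAdj_iff G _).2 ⟨?_, ?_⟩)
      · rw [← Walk.support_reverse]
        exact p.reverse.isChain_adj_support
      · rw [List.map_reverse, List.isChain_reverse]
        exact hd

theorem length_le_mp [Fintype V] (G : SimpleGraph V) (l : List V) (hl : l.Nodup)
    (hc : l.IsChain (UpAdj G)) : l.length ≤ mp G := by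
  rcases eq_or_ne l [] with rfl | hne
  · simp
  obtain ⟨h₁, h₂⟩ := (isChain_upAdj_iff G l).1 hc
  refine le_csSup ⟨Fintype.card V, ?_⟩ ⟨_, _, Walk.ofSupport l hne h₁, ?_, ?_, ?_⟩
  · rintro n ⟨u, v, p, hp, -, rfl⟩
    exact hp.support_nodup.length_le_card
  · rw [Walk.isPath_def, Walk.support_ofSupport]
    exact hl
  · left
    rw [Walk.support_ofSupport]
    exact h₂
  · rw [Walk.support_ofSupport]

theorem exists_length_eq_mp [Fintype V] (G : SimpleGraph V) :
    ∃ l : List V, l.Nodup ∧ l.IsChain (UpAdj G) ∧ l.length = mp G := by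
  by_contra! h
  have hlt : ∀ l : List V, l.Nodup → l.IsChain (UpAdj G) → l.length < mp G := fun l h₁ h₂ =>
    lt_of_le_of_ne (length_le_mp G l h₁ h₂) (h l h₁ h₂)
  have h0 := hlt [] (by simp) (by simp)
  have := mp_le G (mp G - 1) fun l h₁ h₂ => Nat.le_sub_one_of_lt (hlt l h₁ h₂)
  omega

@[simp] theorem cone_adj_some_some (G : SimpleGraph V) (x y : V) :
    (cone G).Adj (some x) (some y) ↔ G.Adj x y := by
  simp only [cone, fromRel_adj]
  have := G.adj_comm x y
  have : G.Adj x y → x ≠ y := fun h => h.ne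
  aesop

@[simp] theorem cone_adj_none_some (G : SimpleGraph V) (x : V) :
    (cone G).Adj none (some x) := by
  simp [cone]

@[simp] theorem cone_adj_some_none (G : SimpleGraph V) (x : V) :
    (cone G).Adj (some x) none := (cone_adj_none_some G x).symm

theorem gdeg_cone_some [Fintype V] (G : SimpleGraph V) (x : V) :
    gdeg (cone G) (some x) = gdeg G x + 1 := by
  have : (cone G).neighborSet (some x) = insert none (some '' G.neighborSet x) := by
    ext (_ | y) <;> simp
  rw [gdeg, this, Set.ncard_insert_of_notMem (by simp),
    Set.ncard_image_of_injective _ (Option.some_injective V), gdeg]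

theorem gdeg_cone_none [Fintype V] (G : SimpleGraph V) :
    gdeg (cone G) none = Nat.card V := by
  have : (cone G).neighborSet none = some '' Set.univ := by
    ext (_ | y) <;> simp
  rw [gdeg, this, Set.ncard_image_of_injective _ (Option.some_injective V), Set.ncard_univ]

theorem gdeg_lt_card [Fintype V] (G : SimpleGraph V) (x : V) : gdeg G x < Nat.card V :=
  Set.ncard_lt_card fun h => G.loopless.irrefl x (h ▸ Set.mem_univ x : x ∈ G.neighborSet x)

theorem adj_of_card_le_gdeg [Fintype V] (G : SimpleGraph V) {x y : V} (hxy : x ≠ y)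
    (h : Nat.card V ≤ gdeg G y + 1) : G.Adj x y := by
  by_contra hadj
  -- Otherwise `x` and `y` are two distinct vertices outside the neighbourhood of `y`.
  have hy : y ∉ G.neighborSet y := G.loopless.irrefl y
  have hx : x ∉ insert y (G.neighborSet y) := by
    rintro (h | h)
    · exact hxy h
    · exact hadj (G.adj_symm h)
  have := Set.ncard_le_card (insert x (insert y (G.neighborSet y)))
  rw [Set.ncard_insert_of_notMem hx, Set.ncard_insert_of_notMem hy] at this
  simp only [gdeg] at h
  omega

theorem upAdj_cone_some_some [Fintype V] (G : SimpleGraph V) (x y : V) :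
    UpAdj (cone G) (some x) (some y) ↔ UpAdj G x y := by
  simp [UpAdj, gdeg_cone_some]

theorem isChain_map_some [Fintype V] (G : SimpleGraph V) (l : List V) :
    (l.map some).IsChain (UpAdj (cone G)) ↔ l.IsChain (UpAdj G) := by
  simp [List.isChain_map, upAdj_cone_some_some]

theorem exists_map_some {l : List (Option V)} (h : none ∉ l) : ∃ l' : List V, l = l'.map some := by
  induction l with
  | nil => exact ⟨[], rfl⟩
  | cons a l ih =>
    simp only [List.mem_cons, not_or] at h
    obtain ⟨l', rfl⟩ := ih h.2
    obtain ⟨x, rfl⟩ := Option.ne_none_iff_exists'.1 (Ne.symm h.1)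
    exact ⟨x :: l', rfl⟩

/-- Holds without saturation, and also for the empty graph. -/
theorem mp_cone [Fintype V] (G : SimpleGraph V) : mp (cone G) = mp G + 1 := by
  apply le_antisymm
  · refine mp_le _ _ fun l hnd hc => ?_
    by_cases hn : none ∈ l
    · obtain ⟨l₁, l₂, rfl⟩ := List.append_of_mem hn
      have h₁ : none ∉ l₁ := by grind
      have h₂ : none ∉ l₂ := by grind
      obtain ⟨m₁, rfl⟩ := exists_map_some h₁
      obtain ⟨m₂, rfl⟩ := exists_map_some h₂
      have hnd' : (m₁ ++ m₂).Nodup := by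
        refine List.Nodup.of_map some ?_
        rw [List.map_append]
        exact hnd.sublist (by simp)
      rw [List.isChain_append, List.isChain_cons] at hc
      obtain ⟨c₁, ⟨hnext, c₂⟩, -⟩ := hc
      have hm : (m₁ ++ m₂).IsChain (UpAdj G) := by
        refine List.isChain_append.2 ⟨(isChain_map_some G _).1 c₁, (isChain_map_some G _).1 c₂,
          fun x hx y hy => ?_⟩
        have hy' := (hnext (some y) (by simp_all)).2
        rw [gdeg_cone_none, gdeg_cone_some] at hy'
        have hxy : x ≠ y := (List.nodup_append.1 hnd').2.2 x (List.mem_of_mem_getLast? hx) y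
          (List.mem_of_mem_head? hy)
        have := gdeg_lt_card G x
        exact ⟨adj_of_card_le_gdeg G hxy hy', by omega⟩
      have := length_le_mp G _ hnd' hm
      simp at this ⊢
      omega
    · obtain ⟨m, rfl⟩ := exists_map_some hn
      have := length_le_mp G m (hnd.of_map some) ((isChain_map_some G m).1 hc)
      simp
      omega
  · obtain ⟨l, hnd, hc, hlen⟩ := exists_length_eq_mp G
    have := length_le_mp (cone G) (l.map some ++ [none]) ?_ ?_
    · simpa [hlen] using this
    · have := hnd.map (Option.some_injective V)
      grind
    · refine List.isChain_append.2 ⟨(isChain_map_some G l).2 hc, by simp, fun x hx y hy => ?_⟩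
      obtain rfl : y = none := by simpa [eq_comm] using hy
      obtain ⟨z, -, rfl⟩ := List.mem_map.1 (List.mem_of_mem_getLast? hx)
      refine ⟨by simp, ?_⟩
      rw [gdeg_cone_none, gdeg_cone_some]
      exact gdeg_lt_card G z

theorem addEdge_cone (G : SimpleGraph V) (x y : V) :
    addEdge (cone G) (some x) (some y) = cone (addEdge G x y) := by
  ext (_ | a) (_ | b) <;> simp [addEdge]

theorem stmt_9 [Fintype V] [Nonempty V] (G : SimpleGraph V) (k : ℕ)
    (hsat : Saturated G) (hmp : mp G = k) :
    mp (cone G) = k + 1 ∧ Saturated (cone G) := by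
  refine ⟨by rw [mp_cone, hmp], ?_⟩
  rintro (_ | x) (_ | y) hne hadj
  · exact absurd rfl hne
  · exact absurd (cone_adj_none_some G y) hadj
  · exact absurd (cone_adj_some_none G x) hadj
  · rw [addEdge_cone, mp_cone, mp_cone]
    have := hsat x y (fun h => hne (h ▸ rfl)) (by simpa using hadj)
    omega
end
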